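/- arXiv:q-alg/9703003 — 3 statements merged into one kernel-verified Lean document; each statement's English description precedes it below -/
import Mathlib

section
/- Let D be a division ring, q a nonzero central element of D, and let (z_{rs}) with r ∈ {1,2,3} and s ∈ {1,2} be a 3×2 quantum matrix over D (its entries satisfy the relations Rel_q) with z_{11} ≠ 0. Set A = z_{22} − z_{21} z_{11}^{-1} z_{12} and C = z_{32} − z_{31} z_{11}^{-1} z_{12}. Then CA = qAC. -/
/-- The relations `Rel_q` of the ring of quantum matrices `M_q(n)` (allowing
rectangular families). -/
def IsQuantumMatrix {D : Type*} [DivisionRing D] (q : D) {m n : ℕ}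
    (z : Fin m → Fin n → D) : Prop :=
  (∀ (i : Fin m) (k l : Fin n), k < l → z i l * z i k = q * (z i k * z i l)) ∧
  (∀ (i j : Fin m) (k : Fin n), i < j → z j k * z i k = q * (z i k * z j k)) ∧
  (∀ (i j : Fin m) (k l : Fin n), i < j → k < l → z i l * z j k = z j k * z i l) ∧
  (∀ (i j : Fin m) (k l : Fin n), i < j → k < l →
    z j l * z i k - z i k * z j l = (q⁻¹ - q) * (z i l * z j k))

/-!
A `3 × 2` quantum matrix consists of three `2 × 2` blocks, one for each pair of rows:
`(a b; c d)`, `(a b; e f)` and `(c d; e f)`. Put `A = d - c a⁻¹ b` and `C = f - e a⁻¹ b`.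

Suppose the main diagonal relation is `d a - a d = s b c` with `q s = q² - 1`. Then `A` and `C`
commute with `a`, hence `q`-commute with `u = a⁻¹ b`. It follows that `C c = c C + s e A` and
`C d = q d C + q s e u A`, and the two error terms cancel in `C A = C d - C c u`.

The main diagonal relation assumed here has `s = q⁻¹ - q`, the opposite sign. Computing `f c a` in
two ways gives `s (1 + q s - q²) b c e = 0`, so either `q s = q² - 1` after all, or one of `b`, `c`,
`e` vanishes, and then `C A = q A C` is a direct consequence of the remaining relations.
-/

/-- A `2 × 2` quantum matrix `(a b; c d)` over a `K`-algebra, with the coefficient `s` of the main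
diagonal relation independent of `q`, so that both signs `s = ±(q - q⁻¹)` are covered. -/
structure IsQuantumBlock {K R : Type*} [CommRing K] [Ring R] [Algebra K R] (q s : K)
    (a b c d : R) : Prop where
  row_top : b * a = q • (a * b)
  row_bottom : d * c = q • (c * d)
  col_left : c * a = q • (a * c)
  col_right : d * b = q • (b * d)
  antidiag : c * b = b * c
  diag : d * a = a * d + s • (b * c)

/-- The quasideterminant of `(a b; c d)` with respect to the entry `d`: what is left of `d` after
row reduction with pivot `a`. It is `d` if `a = 0`, since then `a⁻¹ = 0`. -/
def quasidet {D : Type*} [DivisionRing D] (a b c d : D) : D :=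
  d - c * a⁻¹ * b

section Ring

variable {K R : Type*} [CommRing K] [Ring R] [Algebra K R] {q s : K} {a b c d e f u : R}

theorem IsQuantumBlock.smul_mul_mul_eq_zero (h₁₂ : IsQuantumBlock q s a b c d)
    (h₁₃ : IsQuantumBlock q s a b e f) (h₂₃ : IsQuantumBlock q s c d e f) :
    (s * (1 + q * s - q ^ 2)) • (b * c * e) = 0 := by
  have reorder_fc_first :
      f * c * a = q • (a * c * f) + s • (b * c * e) + (q * s) • (a * d * e + s • (b * c * e)) := by
    linear_combination (norm := skip)
      h₂₃.diag * a + c * h₁₃.diag + h₁₂.col_left * f + s • h₁₂.antidiag * e +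
        s • d * h₁₃.col_left + (q * s) • h₁₂.diag * e
    simp only [mul_add, add_mul, mul_assoc, smul_mul_assoc, mul_smul_comm]
    module
  have reorder_ca_first :
      f * c * a = q • (a * c * f + s • (a * d * e)) + (q ^ 2 * s) • (b * c * e) := by
    linear_combination (norm := skip)
      f * h₁₂.col_left + q • h₁₃.diag * c + q • a * h₂₃.diag + (q * s) • b * h₂₃.col_left
    simp only [mul_add, add_mul, mul_assoc, smul_mul_assoc, mul_smul_comm]
    module
  linear_combination (norm := module) reorder_ca_first - reorder_fc_first

theorem IsQuantumBlock.sub_mul_sub_eq_smul (h : IsQuantumBlock q s c d e f)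
    (hs : q * s = q ^ 2 - 1) (huc : u * c = q • (c * u))
    (hA : (d - c * u) * u = q • (u * (d - c * u))) (hC : (f - e * u) * u = q • (u * (f - e * u))) :
    (f - e * u) * (d - c * u) = q • ((d - c * u) * (f - e * u)) := by
  set A := d - c * u with A_def
  set C := f - e * u with C_def
  have hCc : C * c = c * C + s • (e * A) := by
    have hs_smul : (q * s) • (c * e * u) = (q ^ 2 - 1) • (c * e * u) := by rw [hs]
    linear_combination (norm := skip)
      h.diag - s • h.antidiag - e * huc + (s - q) • h.col_left * u + hs_smul
    simp only [A_def, C_def, mul_sub, sub_mul, mul_assoc, smul_mul_assoc, mul_smul_comm]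
    module
  have hCd : C * d = q • (d * C) + (q * s) • (e * u * A) := by
    have hs_smul : (q * s) • (e * u * A) = (q ^ 2 - 1) • (e * u * A) := by rw [hs]
    linear_combination (norm := skip)
      h.col_right - q • h.antidiag * u + q • e * hA - e * huc * u - hs_smul
    simp only [A_def, C_def, mul_sub, sub_mul, mul_assoc, smul_mul_assoc, mul_smul_comm]
    module
  calc
    C * A = C * d - C * c * u := by rw [A_def, mul_sub, mul_assoc]
    _ = q • (d * C) + (q * s) • (e * u * A) - (c * (C * u) + s • (e * (A * u))) := by
      rw [hCc, hCd, add_mul, smul_mul_assoc, mul_assoc c, mul_assoc e A]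
    _ = q • (d * C) - q • (c * u * C) := by
      rw [hA, hC]
      simp only [mul_smul_comm, mul_assoc]
      module
    _ = q • (A * C) := by rw [A_def, sub_mul, smul_sub]

end Ring

section DivisionRing

variable {K D : Type*} [CommRing K] [DivisionRing D] [Algebra K D] {q s : K} {a b c d e f : D}

theorem inv_mul_eq_smul_mul_inv {x : D} (ha : a ≠ 0) (h : x * a = q • (a * x)) :
    a⁻¹ * x = q • (x * a⁻¹) := by
  apply mul_right_cancel₀ ha
  rw [mul_assoc, h, mul_smul_comm, inv_mul_cancel_left₀ ha, smul_mul_assoc,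
    inv_mul_cancel_right₀ ha]

namespace IsQuantumBlock

theorem inv_mul_mul_bottom_left (h : IsQuantumBlock q s a b c d) (ha : a ≠ 0) :
    a⁻¹ * b * c = q • (c * (a⁻¹ * b)) := by
  rw [mul_assoc, ← h.antidiag, ← mul_assoc, inv_mul_eq_smul_mul_inv ha h.col_left, smul_mul_assoc,
    mul_assoc]

theorem quasidet_mul_top_right (h : IsQuantumBlock q s a b c d) (ha : a ≠ 0) :
    quasidet a b c d * b = q • (b * quasidet a b c d) := by
  have pivot : c * a⁻¹ * b * b = q • (b * (c * a⁻¹ * b)) :=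
    calc
      c * a⁻¹ * b * b = c * (q • (b * a⁻¹)) * b := by
        rw [mul_assoc c, inv_mul_eq_smul_mul_inv ha h.row_top]
      _ = q • (c * b * (a⁻¹ * b)) := by simp only [mul_smul_comm, smul_mul_assoc, mul_assoc]
      _ = q • (b * (c * a⁻¹ * b)) := by rw [h.antidiag, mul_assoc b, mul_assoc c]
  rw [quasidet, sub_mul, h.col_right, pivot, mul_sub, smul_sub]

theorem mul_quasidet_of_bottom_left_eq_zero (h₁₃ : IsQuantumBlock q s a b 0 f)
    (h₂₃ : IsQuantumBlock q s c d 0 f) : f * quasidet a b c d = q • (quasidet a b c d * f) := by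
  have hfa : Commute f a := by simpa [commute_iff_eq] using h₁₃.diag
  have hfc : Commute f c := by simpa [commute_iff_eq] using h₂₃.diag
  have pivot : f * (c * a⁻¹ * b) = q • (c * a⁻¹ * b * f) := by
    rw [← mul_assoc, (hfc.mul_right hfa.inv_right₀).eq, mul_assoc, h₁₃.col_right, mul_smul_comm,
      ← mul_assoc]
  rw [quasidet, mul_sub, h₂₃.col_right, pivot, sub_mul, smul_sub]

end IsQuantumBlock

end DivisionRing

section Field

variable {K D : Type*} [Field K] [DivisionRing D] [Algebra K D] {q s : K} {a b c d e f : D}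

namespace IsQuantumBlock

theorem commute_quasidet_top_left (h : IsQuantumBlock q s a b c d) (hq : q ≠ 0)
    (hs : q * s = q ^ 2 - 1) (ha : a ≠ 0) : Commute (quasidet a b c d) a := by
  have pivot_left : q • (a * (c * a⁻¹ * b)) = b * c := by
    rw [← h.antidiag, mul_assoc, ← mul_assoc, ← smul_mul_assoc, ← h.col_left, mul_assoc,
      mul_inv_cancel_left₀ ha]
  have pivot_right : c * a⁻¹ * b * a = q • (b * c) := by
    rw [mul_assoc, h.row_top, mul_smul_comm, mul_assoc, inv_mul_cancel_left₀ ha, h.antidiag]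
  have hs_smul : (q * s) • (b * c) = (q ^ 2 - 1) • (b * c) := by rw [hs]
  refine smul_right_injective D hq ?_
  simp only [quasidet, sub_mul, mul_sub, h.diag, pivot_right]
  linear_combination (norm := module) hs_smul + pivot_left

theorem quasidet_mul_inv_mul (h : IsQuantumBlock q s a b c d) (hq : q ≠ 0)
    (hs : q * s = q ^ 2 - 1) (ha : a ≠ 0) :
    quasidet a b c d * (a⁻¹ * b) = q • (a⁻¹ * b * quasidet a b c d) := by
  rw [← mul_assoc, (h.commute_quasidet_top_left hq hs ha).inv_right₀.eq, mul_assoc,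
    h.quasidet_mul_top_right ha, mul_smul_comm, mul_assoc]

theorem quasidet_mul_quasidet_of_mul_eq_sq_sub_one (h₁₂ : IsQuantumBlock q s a b c d)
    (h₁₃ : IsQuantumBlock q s a b e f) (h₂₃ : IsQuantumBlock q s c d e f) (hq : q ≠ 0)
    (hs : q * s = q ^ 2 - 1) (ha : a ≠ 0) :
    quasidet a b e f * quasidet a b c d = q • (quasidet a b c d * quasidet a b e f) := by
  have hA := h₁₂.quasidet_mul_inv_mul hq hs ha
  have hC := h₁₃.quasidet_mul_inv_mul hq hs ha
  simp only [quasidet, mul_assoc _ a⁻¹ b] at hA hC ⊢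
  exact h₂₃.sub_mul_sub_eq_smul hs (h₁₂.inv_mul_mul_bottom_left ha) hA hC

theorem quasidet_mul_quasidet (h₁₂ : IsQuantumBlock q s a b c d)
    (h₁₃ : IsQuantumBlock q s a b e f) (h₂₃ : IsQuantumBlock q s c d e f) (hq : q ≠ 0)
    (hs : s = 0 → q ^ 2 = 1) (ha : a ≠ 0) :
    quasidet a b e f * quasidet a b c d = q • (quasidet a b c d * quasidet a b e f) := by
  by_cases hqs : q * s = q ^ 2 - 1
  · exact quasidet_mul_quasidet_of_mul_eq_sq_sub_one h₁₂ h₁₃ h₂₃ hq hqs ha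
  have hs0 : s ≠ 0 := fun h => hqs (by rw [hs h, h, mul_zero, sub_self])
  have hcoeff : s * (1 + q * s - q ^ 2) ≠ 0 :=
    mul_ne_zero hs0 fun h => hqs (by linear_combination h)
  have hbce : b * c * e = 0 :=
    (smul_eq_zero.1 (h₁₂.smul_mul_mul_eq_zero h₁₃ h₂₃)).resolve_left hcoeff
  obtain (rfl | rfl) | rfl : (b = 0 ∨ c = 0) ∨ e = 0 := by simpa using hbce
  · simpa [quasidet] using h₂₃.col_right
  · obtain rfl | rfl : d = 0 ∨ e = 0 := by simpa [hs0] using h₂₃.diag.symm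
    · simp [quasidet]
    · simpa [quasidet] using h₂₃.col_right
  · simpa [quasidet] using mul_quasidet_of_bottom_left_eq_zero h₁₃ h₂₃

end IsQuantumBlock

theorem IsQuantumMatrix.isQuantumBlock {m n : ℕ} {z : Fin m → Fin n → D}
    (hz : IsQuantumMatrix (algebraMap K D q) z) {i j : Fin m} {k l : Fin n} (hij : i < j)
    (hkl : k < l) : IsQuantumBlock q (q⁻¹ - q) (z i k) (z i l) (z j k) (z j l) := by
  obtain ⟨row, col, antidiag, diag⟩ := hz
  simp only [← map_inv₀, ← map_sub, ← Algebra.smul_def] at row col diag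
  exact
    { row_top := row i k l hkl
      row_bottom := row j k l hkl
      col_left := col i j k hij
      col_right := col i j l hij
      antidiag := (antidiag i j k l hij hkl).symm
      diag := sub_eq_iff_eq_add'.1 (diag i j k l hij hkl) }

end Field

theorem row_reduced_CA_eq_qAC_general {D : Type*} [DivisionRing D] {q : D} (hq : q ≠ 0)
    (hqc : ∀ x : D, q * x = x * q) {m n : ℕ} {z : Fin m → Fin n → D} (hz : IsQuantumMatrix q z)
    {i₁ i₂ i₃ : Fin m} (h₁₂ : i₁ < i₂) (h₂₃ : i₂ < i₃) {k l : Fin n} (hkl : k < l)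
    (hpivot : z i₁ k ≠ 0) :
    (z i₃ l - z i₃ k * (z i₁ k)⁻¹ * z i₁ l) * (z i₂ l - z i₂ k * (z i₁ k)⁻¹ * z i₁ l) =
      q * ((z i₂ l - z i₂ k * (z i₁ k)⁻¹ * z i₁ l) *
        (z i₃ l - z i₃ k * (z i₁ k)⁻¹ * z i₁ l)) := by
  lift q to Subring.center D using Subring.mem_center_iff.2 fun x => (hqc x).symm
  have hq0 : q ≠ 0 := fun h => hq (congrArg Subtype.val h)
  have hsign : q⁻¹ - q = 0 → q ^ 2 = 1 := fun h => by
    rw [sq, ← mul_inv_cancel₀ hq0, sub_eq_zero.1 h]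
  have block {i j : Fin m} (hij : i < j) :
      IsQuantumBlock q (q⁻¹ - q) (z i k) (z i l) (z j k) (z j l) := hz.isQuantumBlock hij hkl
  exact (block h₁₂).quasidet_mul_quasidet (block (h₁₂.trans h₂₃)) (block h₂₃) hq0 hsign hpivot

/-- Lemma `CA = qAC` for the row-reduced entries
`A = z₂₂ - z₂₁ z₁₁⁻¹ z₁₂` and `C = z₃₂ - z₃₁ z₁₁⁻¹ z₁₂` of a `3 × 2`
quantum matrix with `z₁₁ ≠ 0`. -/
theorem row_reduced_CA_eq_qAC {D : Type*} [DivisionRing D] (q : D)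
    (hq : q ≠ 0) (hqc : ∀ x : D, q * x = x * q)
    (z : Fin 3 → Fin 2 → D) (hz : IsQuantumMatrix q z) (h11 : z 0 0 ≠ 0) :
    (z 2 1 - z 2 0 * (z 0 0)⁻¹ * z 0 1) * (z 1 1 - z 1 0 * (z 0 0)⁻¹ * z 0 1) =
      q * ((z 1 1 - z 1 0 * (z 0 0)⁻¹ * z 0 1) *
        (z 2 1 - z 2 0 * (z 0 0)⁻¹ * z 0 1)) := by
  exact row_reduced_CA_eq_qAC_general hq hqc hz (by decide) (by decide) (by decide) h11
end

section
/- Let D be a division ring, q a nonzero central element of D, and n ≥ 2. Let z = (z_{ij})_{1≤i,j≤n} be a quantum matrix over D with z_{11} ≠ 0, and let z' be its row reduction: z'_{1j} = z_{1j} for all j, z'_{i1} = 0 for i ≥ 2, and z'_{ij} = z_{ij} − z_{i1} z_{11}^{-1} z_{1j} for i, j ≥ 2. Then the quantum determinants agree: det_q(z') = det_q(z). -/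
/-- The number of inversions (the length) of a permutation. -/
def inversions {n : ℕ} (σ : Equiv.Perm (Fin n)) : ℕ :=
  (Finset.univ.filter (fun x : Fin n × Fin n => x.1 < x.2 ∧ σ x.2 < σ x.1)).card

/-- The quantum determinant
`det_q(z) = Σ_{σ} (-q⁻¹)^{ℓ(σ)} z_{1σ(1)} z_{2σ(2)} ⋯ z_{nσ(n)}`,
with the (noncommutative) product taken in increasing row order. -/
def qdet {D : Type*} [DivisionRing D] (q : D) {n : ℕ}
    (z : Fin n → Fin n → D) : D :=
  ∑ σ : Equiv.Perm (Fin n),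
    (-q⁻¹) ^ inversions σ * (List.ofFn fun i => z i (σ i)).prod

/-!
Row `i` of the row reduction is `z i - x * z 0` with `x = z i 0 * (z 0 0)⁻¹`. Clearing the rows one
at a time, from the bottom, it suffices that the quantum determinant vanishes once row `i` of `z`
is replaced by `x * z 0`, whatever the rows below it are.

The quantum determinant depends on two adjacent rows only through their `2 × 2` quantum minors. For
`0 < j < i` the minors of `z j` and `x * z 0` are `-q⁻¹` times those of `x * z 0` and `z j`, so
`x * z 0` can be exchanged with the rows above it until it lies directly below `z 0`; there all the
minors of the two rows vanish.

If the scalar in the main diagonal relations is `q - q⁻¹`, the exchange rule is a direct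
computation. Any other nonzero scalar makes the relations between three rows so rigid that, in the
columns `k < l` of the minor, `z 0 l = 0` or `z j = 0` or `z i 0 = 0`; in each case the rule
persists.
-/

open Function Equiv

theorem inversions_mul_swap {n : ℕ} {σ : Perm (Fin (n + 1))} {i : Fin n}
    (h : σ i.castSucc < σ i.succ) :
    inversions (σ * swap i.castSucc i.succ) = inversions σ + 1 := by
  set s := swap i.castSucc i.succ with hs
  have hlt : i.castSucc < i.succ := i.castSucc_lt_succ
  have swap_lt_swap (x y : Fin (n + 1)) (h₁ : (x, y) ≠ (i.castSucc, i.succ))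
      (h₂ : (x, y) ≠ (i.succ, i.castSucc)) : s x < s y ↔ x < y := by
    rw [Ne, Prod.mk.injEq] at h₁ h₂
    rw [hs, swap_apply_def, swap_apply_def]
    split_ifs <;> simp only [Fin.lt_def, Fin.ext_iff, Fin.val_castSucc, Fin.val_succ] at * <;> lia
  have inversions_eq_insert :
      (Finset.univ.filter fun x : Fin (n + 1) × Fin (n + 1) =>
        x.1 < x.2 ∧ (σ * s) x.2 < (σ * s) x.1) =
      insert (i.castSucc, i.succ) ((Finset.univ.filter fun x : Fin (n + 1) × Fin (n + 1) =>
        x.1 < x.2 ∧ σ x.2 < σ x.1).map (s.prodCongr s).toEmbedding) := by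
    ext ⟨x, y⟩
    rw [Finset.mem_insert, Finset.mem_map_equiv, Finset.mem_filter_univ, Finset.mem_filter_univ]
    simp only [prodCongr_symm, prodCongr_apply, Prod.map, Perm.mul_apply,
      show s.symm = s from symm_swap _ _]
    by_cases h₁ : (x, y) = (i.castSucc, i.succ)
    · obtain ⟨rfl, rfl⟩ := Prod.mk.inj h₁
      simp [hs, h]
    by_cases h₂ : (x, y) = (i.succ, i.castSucc)
    · obtain ⟨rfl, rfl⟩ := Prod.mk.inj h₂
      simp [hs, h.not_gt, hlt.not_gt, hlt.ne']
    · simp only [h₁, false_or, swap_lt_swap x y h₁ h₂]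
  rw [inversions, inversions_eq_insert, Finset.card_insert_of_notMem, Finset.card_map, inversions]
  simp [hs, hlt.not_gt]

theorem sum_perm_eq_sum_filter_lt_add_mul_swap {α M : Type*} [Fintype α] [LinearOrder α]
    [AddCommMonoid M] {i j : α} (hij : i ≠ j) (F : Perm α → M) :
    ∑ σ, F σ = ∑ σ with σ i < σ j, (F σ + F (σ * swap i j)) := by
  rw [← Finset.sum_filter_add_sum_filter_not Finset.univ (fun σ : Perm α => σ i < σ j) F,
    Finset.sum_add_distrib]
  congr 1
  refine Finset.sum_equiv (Equiv.mulRight (swap i j)) (fun σ => ?_) fun σ _ => ?_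
  · have : σ i ≠ σ j := σ.injective.ne hij
    simp [this.symm.le_iff_lt]
  · simp [mul_assoc]

theorem exists_prod_ofFn_update_update {M : Type*} [Monoid M] {n : ℕ} (f : Fin (n + 1) → M)
    (i : Fin n) : ∃ a b : M, ∀ x y,
      (List.ofFn (update (update f i.castSucc x) i.succ y)).prod = a * (x * y) * b := by
  induction n with
  | zero => exact i.elim0
  | succ n ih =>
    cases i using Fin.cases with
    | zero =>
      refine ⟨1, (List.ofFn fun j : Fin n => f j.succ.succ).prod, fun x y => ?_⟩
      have h : ∀ j : Fin n, j.succ.succ ≠ 1 := fun j => by simp [Fin.ext_iff]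
      simp [List.ofFn_succ, h, mul_assoc]
    | succ i =>
      obtain ⟨a, b, h⟩ := ih (fun j => f j.succ) i
      refine ⟨f 0 * a, b, fun x y => ?_⟩
      have tail_update : (fun j => update (update f i.castSucc.succ x) i.succ.succ y j.succ) =
          update (update (fun j => f j.succ) i.castSucc x) i.succ y := by
        ext j
        simp [update_apply]
      rw [List.ofFn_succ, ← Fin.succ_castSucc, tail_update, List.prod_cons, h]
      simp [(Fin.succ_ne_zero _).symm, mul_assoc]

theorem apply_eq_of_apply_update_eq {α β : Type*} {n : ℕ} {F : (Fin n → α) → β} {u v : Fin n → α}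
    (h : ∀ i w, (∀ r ≤ i, w r = u r) → F (update w i (v i)) = F w) : F v = F u := by
  let hybrid (m : ℕ) : Fin n → α := fun r => if (r : ℕ) < m then u r else v r
  have hybrid_eq (m : ℕ) (hm : m ≤ n) : F (hybrid m) = F v := by
    induction m with
    | zero => simp [hybrid]
    | succ m ih =>
      let i : Fin n := ⟨m, hm⟩
      have hybrid_succ : update (hybrid (m + 1)) i (v i) = hybrid m := by
        rw [update_eq_iff]
        refine ⟨by simp [hybrid, i], fun r hr => ?_⟩
        have : (r : ℕ) ≠ m := Fin.val_ne_iff.2 hr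
        simp only [hybrid, Nat.lt_succ_iff_lt_or_eq, this, or_false]
      rw [← ih (Nat.le_of_succ_le hm), ← hybrid_succ, h]
      intro r hr
      exact if_pos (Nat.lt_succ_of_le hr)
  rw [← hybrid_eq n le_rfl]
  simp [hybrid]

/-- The `2 × 2` quantum minor, in columns `k` and `l`, of the rows `u` and `v`. -/
def qminor {K A ι : Type*} [Field K] [Ring A] [Algebra K A] (q : K) (u v : ι → A) (k l : ι) : A :=
  u k * v l - q⁻¹ • (u l * v k)

section RowOperations

variable {D : Type*} [DivisionRing D] {n : ℕ}

theorem qdet_update_sub (q : D) (w : Fin n → Fin n → D) (i : Fin n) (u v : Fin n → D) :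
    qdet q (update w i (u - v)) = qdet q (update w i u) - qdet q (update w i v) := by
  simp only [qdet, ← Finset.sum_sub_distrib, ← mul_sub]
  refine Finset.sum_congr rfl fun σ _ => ?_
  have prod_update (x : Fin n → D) : (List.ofFn fun j => update w i x j (σ j)).prod =
      MultilinearMap.mkPiAlgebraFin ℤ n D (update (fun j => w j (σ j)) i (x (σ i))) := by
    simp only [MultilinearMap.mkPiAlgebraFin_apply, apply_update fun j (r : Fin n → D) => r (σ j)]
  rw [prod_update, prod_update, prod_update, Pi.sub_apply, MultilinearMap.map_update_sub]

variable {K : Type*} [Field K] [Algebra K D]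

theorem qdet_algebraMap (q : K) (w : Fin n → Fin n → D) :
    qdet (algebraMap K D q) w =
      ∑ σ : Perm (Fin n), (-q⁻¹) ^ inversions σ • (List.ofFn fun i => w i (σ i)).prod := by
  simp only [qdet, Algebra.smul_def, map_pow, map_neg, map_inv₀]

theorem exists_qdet_update_update_eq_sum_qminor (q : K) (w : Fin (n + 1) → Fin (n + 1) → D)
    (i : Fin n) : ∃ a b : Perm (Fin (n + 1)) → D, ∀ u v,
      qdet (algebraMap K D q) (update (update w i.castSucc u) i.succ v) =
        ∑ σ with σ i.castSucc < σ i.succ,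
          a σ * qminor q u v (σ i.castSucc) (σ i.succ) * b σ := by
  have hne : i.castSucc ≠ i.succ := i.castSucc_lt_succ.ne
  choose a b hab using fun σ : Perm (Fin (n + 1)) =>
    exists_prod_ofFn_update_update (fun j => w j (σ j)) i
  refine ⟨fun σ => (-q⁻¹) ^ inversions σ • a σ, b, fun u v => ?_⟩
  rw [qdet_algebraMap, sum_perm_eq_sum_filter_lt_add_mul_swap hne]
  refine Finset.sum_congr rfl fun σ hσ => ?_
  have prod_perm : (List.ofFn fun j =>
      update (update w i.castSucc u) i.succ v j (σ j)).prod =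
        a σ * (u (σ i.castSucc) * v (σ i.succ)) * b σ := by
    rw [← hab]
    simp only [apply_update fun j (r : Fin (n + 1) → D) => r (σ j)]
  have prod_perm_swap : (List.ofFn fun j =>
      update (update w i.castSucc u) i.succ v j ((σ * swap i.castSucc i.succ) j)).prod =
        a σ * (u (σ i.succ) * v (σ i.castSucc)) * b σ := by
    rw [← hab]
    congr 2 with j
    obtain rfl | h₁ := eq_or_ne j i.succ
    · simp
    obtain rfl | h₂ := eq_or_ne j i.castSucc
    · simp [hne]
    · simp [h₁, h₂, swap_apply_of_ne_of_ne]
  rw [prod_perm, prod_perm_swap, inversions_mul_swap (Finset.mem_filter.1 hσ).2, pow_succ, qminor]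
  simp only [mul_sub, sub_mul, mul_smul_comm, smul_mul_assoc]
  module

theorem qdet_update_update_eq_smul {q κ : K} (w : Fin (n + 1) → Fin (n + 1) → D) (i : Fin n)
    {u v u' v' : Fin (n + 1) → D} (h : ∀ k l, k < l → qminor q u v k l = κ • qminor q u' v' k l) :
    qdet (algebraMap K D q) (update (update w i.castSucc u) i.succ v) =
      κ • qdet (algebraMap K D q) (update (update w i.castSucc u') i.succ v') := by
  obtain ⟨a, b, hab⟩ := exists_qdet_update_update_eq_sum_qminor q w i
  rw [hab, hab, Finset.smul_sum]
  refine Finset.sum_congr rfl fun σ hσ => ?_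
  rw [h _ _ (Finset.mem_filter.1 hσ).2, mul_smul_comm, smul_mul_assoc]

theorem qdet_eq_zero_of_adjacent_qminor_eq_zero {q : K} {w : Fin (n + 1) → Fin (n + 1) → D}
    {i : Fin n} (h : ∀ k l, k < l → qminor q (w i.castSucc) (w i.succ) k l = 0) :
    qdet (algebraMap K D q) w = 0 := by
  have := qdet_update_update_eq_smul (κ := 0) (u' := 0) (v' := 0) w i
    fun k l hkl => (h k l hkl).trans (zero_smul K _).symm
  simpa using this

theorem qdet_eq_smul_qdet_comp_swap {q κ : K} {w : Fin (n + 1) → Fin (n + 1) → D} {i : Fin n}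
    (h : ∀ k l, k < l → qminor q (w i.castSucc) (w i.succ) k l =
      κ • qminor q (w i.succ) (w i.castSucc) k l) :
    qdet (algebraMap K D q) w =
      κ • qdet (algebraMap K D q) (w ∘ swap i.castSucc i.succ) := by
  rw [swap_comm, comp_swap_eq_update, ← qdet_update_update_eq_smul w i h]
  simp

theorem qdet_eq_zero_of_qminor {q κ : K} {w : Fin (n + 1) → Fin (n + 1) → D} {i j : Fin (n + 1)}
    (hij : i < j) (hw : ∀ k l, k < l → qminor q (w i) (w j) k l = 0)
    (hswap : ∀ m, i < m → m < j → ∀ k l, k < l →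
      qminor q (w m) (w j) k l = κ • qminor q (w j) (w m) k l) :
    qdet (algebraMap K D q) w = 0 := by
  induction j using Fin.induction generalizing w with
  | zero => exact absurd hij i.not_lt_zero
  | succ j ih =>
    obtain rfl | hlt := (Fin.le_castSucc_iff.2 hij).eq_or_lt
    · exact qdet_eq_zero_of_adjacent_qminor_eq_zero hw
    have swap_eq_self (m) (hm : m < j.castSucc) : swap j.castSucc j.succ m = m :=
      swap_apply_of_ne_of_ne hm.ne (hm.trans j.castSucc_lt_succ).ne
    rw [qdet_eq_smul_qdet_comp_swap (hswap _ hlt j.castSucc_lt_succ), ih hlt, smul_zero]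
    · simpa [swap_eq_self i hlt] using hw
    · intro m him hmj
      simpa [swap_eq_self m hmj] using hswap m him (hmj.trans j.castSucc_lt_succ)

end RowOperations

/-- The relations of quantum matrices with an arbitrary scalar `c` in the main diagonal relations.
`IsQuantumMatrix` has `c = q⁻¹ - q`, whereas in the standard coordinate ring of quantum matrices
with these row and column relations `c = q - q⁻¹`. -/
structure IsQuantumMatrixWith {K A ι κ : Type*} [CommSemiring K] [Semiring A] [Algebra K A]
    [LT ι] [LT κ] (q c : K) (z : ι → κ → A) : Prop where
  row {i k l} : k < l → z i l * z i k = q • (z i k * z i l)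
  col {i j k} : i < j → z j k * z i k = q • (z i k * z j k)
  antidiag {i j k l} : i < j → k < l → z i l * z j k = z j k * z i l
  diag {i j k l} : i < j → k < l → z j l * z i k = z i k * z j l + c • (z i l * z j k)

theorem IsQuantumMatrix.isQuantumMatrixWith {K D : Type*} [Field K] [DivisionRing D] [Algebra K D]
    {q : K} {m n : ℕ} {z : Fin m → Fin n → D} (hz : IsQuantumMatrix (algebraMap K D q) z) :
    IsQuantumMatrixWith q (q⁻¹ - q) z where
  row h := by rw [Algebra.smul_def]; exact hz.1 _ _ _ h
  col h := by rw [Algebra.smul_def]; exact hz.2.1 _ _ _ h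
  antidiag h h' := hz.2.2.1 _ _ _ _ h h'
  diag h h' := by
    rw [Algebra.smul_def, map_sub, map_inv₀, ← hz.2.2.2 _ _ _ _ h h', add_sub_cancel]

namespace IsQuantumMatrixWith

section Overlap

variable {K A ι κ : Type*} [Field K] [Ring A] [Algebra K A] [Preorder ι] {q c : K}
  {z : ι → κ → A} {i j m : ι} {k l : κ}

/-- The vanishing combination is the discrepancy between the two ways of reordering
`z m l * z j k * z i k`, starting from its left pair or from its right pair of factors. -/
theorem smul_mul_mul_eq_zero [LT κ] (hz : IsQuantumMatrixWith q c z) (hq : q ≠ 0)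
    (hij : i < j) (hjm : j < m) (hkl : k < l) :
    (c * (c - (q - q⁻¹))) • (z i l * z j k * z m k) = 0 := by
  have him := hij.trans hjm
  have left_first : z m l * z j k * z i k =
      q • (z i k * z j k * z m l) + (c * q) • (z i k * z j l * z m k)
        + (c + c * c * q) • (z i l * z j k * z m k) :=
    calc z m l * z j k * z i k
      _ = z j k * (z m l * z i k) + c • (z j l * (z m k * z i k)) := by
        rw [hz.diag hjm hkl, add_mul, smul_mul_assoc, mul_assoc, mul_assoc]
      _ = z j k * z i k * z m l + c • (z j k * z i l * z m k)
            + (c * q) • (z j l * z i k * z m k) := by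
        rw [hz.diag him hkl, hz.col him]
        simp only [mul_add, mul_smul_comm, smul_smul, mul_assoc]
      _ = _ := by
        rw [hz.col hij, ← hz.antidiag hij hkl, hz.diag hij hkl]
        simp only [add_mul, smul_mul_assoc]
        module
  have right_first : z m l * z j k * z i k =
      q • (z i k * z j k * z m l) + (c * q) • (z i k * z j l * z m k)
        + (c * q * q) • (z i l * z j k * z m k) :=
    calc z m l * z j k * z i k
      _ = q • (z m l * z i k * z j k) := by
        rw [mul_assoc, hz.col hij, mul_smul_comm, mul_assoc]
      _ = q • (z i k * (z m l * z j k)) + (c * q) • (z i l * (z m k * z j k)) := by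
        rw [hz.diag him hkl, add_mul, smul_mul_assoc, mul_assoc, mul_assoc]
        module
      _ = _ := by
        rw [hz.diag hjm hkl, hz.col hjm]
        simp only [mul_add, mul_smul_comm, mul_assoc]
        module
  linear_combination (norm := (match_scalars <;> field_simp <;> ring))
    q⁻¹ • (left_first.symm.trans right_first)

theorem eq_sub_inv_or_eq_zero [PartialOrder κ] [IsDomain A]
    (hz : IsQuantumMatrixWith q c z) (hq : q ≠ 0) (hc : c = 0 → q = q⁻¹)
    (hij : i < j) (hjm : j < m) (hkl : k < l) :
    c = q - q⁻¹ ∨ z i l = 0 ∨ (∀ p, k ≤ p → z j p = 0) ∨ z m k = 0 := by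
  by_cases hc' : c = q - q⁻¹
  · exact Or.inl hc'
  have hc₀ : c ≠ 0 := fun h => hc' (by rw [h, ← hc h, sub_self])
  have prod_eq_zero : (z i l = 0 ∨ z j k = 0) ∨ z m k = 0 := by
    simpa [hc₀, sub_ne_zero.2 hc'] using hz.smul_mul_mul_eq_zero hq hij hjm hkl
  by_cases hm : z m k = 0
  · exact Or.inr (Or.inr (Or.inr hm))
  refine Or.inr ((prod_eq_zero.resolve_right hm).imp_right fun hj => Or.inl fun p hp => ?_)
  obtain rfl | hkp := hp.eq_or_lt
  · exact hj
  · simpa [hj, hc₀, hm] using (hz.diag hjm hkp).symm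

end Overlap

end IsQuantumMatrixWith

section RowReduction

variable {D : Type*} [DivisionRing D] {m n : ℕ}

/-- The left coefficient by which row `0` is multiplied when the entry in row `i` and column `0` is
cleared with the pivot `z 0 0`. -/
def pivotRatio (z : Fin (m + 1) → Fin (n + 1) → D) (i : Fin (m + 1)) : D :=
  z i 0 * (z 0 0)⁻¹

/-- The multiple of row `0` that is subtracted from row `i` in the row reduction of `z`. -/
def pivotMultiple (z : Fin (m + 1) → Fin (n + 1) → D) (i : Fin (m + 1)) : Fin (n + 1) → D :=
  fun k => pivotRatio z i * z 0 k

/-- The row reduction of `z` with pivot `z 0 0`, for which column `0` needs no separate clause as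
long as the pivot is nonzero. -/
def rowReduction (z : Fin (m + 1) → Fin (n + 1) → D) : Fin (m + 1) → Fin (n + 1) → D :=
  update (fun i => z i - pivotMultiple z i) 0 (z 0)

variable {z : Fin (m + 1) → Fin (n + 1) → D}

theorem pivotRatio_mul_pivot (h₀ : z 0 0 ≠ 0) (i : Fin (m + 1)) :
    pivotRatio z i * z 0 0 = z i 0 :=
  inv_mul_cancel_right₀ h₀ _

theorem eq_rowReduction {z' : Fin (m + 1) → Fin (n + 1) → D} (h₀ : z 0 0 ≠ 0)
    (h_row : ∀ j, z' 0 j = z 0 j) (h_col : ∀ i, i ≠ 0 → z' i 0 = 0)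
    (h_ij : ∀ i j, i ≠ 0 → j ≠ 0 → z' i j = z i j - z i 0 * (z 0 0)⁻¹ * z 0 j) :
    z' = rowReduction z := by
  ext i j
  obtain rfl | hi := eq_or_ne i 0
  · simp [rowReduction, h_row]
  rw [rowReduction, update_of_ne hi, Pi.sub_apply, pivotMultiple]
  obtain rfl | hj := eq_or_ne j 0
  · rw [h_col i hi, pivotRatio_mul_pivot h₀, sub_self]
  · exact h_ij i j hi hj

end RowReduction

namespace IsQuantumMatrixWith

variable {K D : Type*} [Field K] [DivisionRing D] [Algebra K D] {m n : ℕ} {q c : K}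
  {z : Fin (m + 1) → Fin (n + 1) → D} {i j : Fin (m + 1)}

theorem pivotRow_mul_pivotRatio (hz : IsQuantumMatrixWith q c z) (hq : q ≠ 0) (h₀ : z 0 0 ≠ 0)
    (hi : 0 < i) (k : Fin (n + 1)) :
    z 0 k * pivotRatio z i = q⁻¹ • (pivotRatio z i * z 0 k) := by
  refine mul_right_cancel₀ h₀ ?_
  rw [smul_mul_assoc, mul_assoc, mul_assoc, pivotRatio_mul_pivot h₀, eq_inv_smul_iff₀ hq]
  obtain rfl | hk := k.zero_le.eq_or_lt
  · rw [← mul_assoc, pivotRatio_mul_pivot h₀, ← hz.col hi]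
  · rw [hz.row hk, mul_smul_comm, ← mul_assoc, pivotRatio_mul_pivot h₀, hz.antidiag hi hk]

theorem sub_smul_pivotRatio_mul_mul_eq_zero (hz : IsQuantumMatrixWith q c z) (hq : q ≠ 0)
    (hc : c = 0 → q = q⁻¹) (hj : 0 < j) (hji : j < i) {k l : Fin (n + 1)} (hkl : k < l) :
    (c - (q - q⁻¹)) • (pivotRatio z i * (z 0 l * z j k)) = 0 := by
  rcases hz.eq_sub_inv_or_eq_zero hq hc hj hji (k.zero_le.trans_lt hkl) with h | h | h | h
  · rw [h, sub_self, zero_smul]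
  · simp [h]
  · simp [h k k.zero_le]
  · simp [pivotRatio, h]

theorem mul_pivotRatio (hz : IsQuantumMatrixWith q c z) (hq : q ≠ 0) (hc : c = 0 → q = q⁻¹)
    (h₀ : z 0 0 ≠ 0) (hj : 0 < j) (hji : j < i) (k : Fin (n + 1)) :
    z j k * pivotRatio z i = pivotRatio z i * z j k -
      (1 - q⁻¹ * q⁻¹) • (pivotRatio z i * (pivotRatio z j * z 0 k)) := by
  obtain rfl | hk := k.zero_le.eq_or_lt
  · have zero_col : z j 0 * pivotRatio z i = (q⁻¹ * q⁻¹) • (pivotRatio z i * z j 0) := by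
      refine mul_right_cancel₀ h₀ ?_
      rw [mul_assoc, pivotRatio_mul_pivot h₀, smul_mul_assoc, mul_assoc, hz.col hj, mul_smul_comm,
        ← mul_assoc, pivotRatio_mul_pivot h₀, hz.col hji, ← smul_smul, inv_smul_smul₀ hq,
        inv_smul_smul₀ hq]
    rw [pivotRatio_mul_pivot h₀, zero_col]
    module
  · refine mul_right_cancel₀ h₀ ?_
    have clear_left : z j k * pivotRatio z i * z 0 0 = z i 0 * z j k := by
      rw [mul_assoc, pivotRatio_mul_pivot h₀, ← hz.antidiag hji hk]
    have clear_right : pivotRatio z i * z j k * z 0 0 =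
        z i 0 * z j k + c • (pivotRatio z i * (z 0 k * z j 0)) := by
      rw [mul_assoc, hz.diag hj hk, mul_add, mul_smul_comm, ← mul_assoc, pivotRatio_mul_pivot h₀]
    have clear_product : pivotRatio z i * (pivotRatio z j * z 0 k) * z 0 0 =
        q • (pivotRatio z i * (z 0 k * z j 0)) := by
      rw [mul_assoc, mul_assoc, hz.row hk, hz.antidiag hj hk, mul_smul_comm, mul_smul_comm,
        ← mul_assoc (pivotRatio z j), pivotRatio_mul_pivot h₀]
    rw [sub_mul, smul_mul_assoc, clear_left, clear_right, clear_product]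
    linear_combination (norm := (match_scalars <;> field_simp <;> ring))
      -hz.sub_smul_pivotRatio_mul_mul_eq_zero hq hc hj hji hk

theorem qminor_pivotMultiple_right (hz : IsQuantumMatrixWith q c z) (hq : q ≠ 0)
    (hc : c = 0 → q = q⁻¹) (h₀ : z 0 0 ≠ 0) (hj : 0 < j) (hji : j < i) {k l : Fin (n + 1)}
    (hkl : k < l) :
    qminor q (z j) (pivotMultiple z i) k l = -q⁻¹ • qminor q (pivotMultiple z i) (z j) k l := by
  have move_ratio (k l) : z j k * (pivotRatio z i * z 0 l) = pivotRatio z i * (z j k * z 0 l) -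
      (1 - q⁻¹ * q⁻¹) • (pivotRatio z i * (pivotRatio z j * (z 0 k * z 0 l))) := by
    rw [← mul_assoc, hz.mul_pivotRatio hq hc h₀ hj hji, sub_mul, smul_mul_assoc]
    simp only [mul_assoc]
  simp only [qminor, pivotMultiple]
  rw [move_ratio, move_ratio, hz.row hkl, ← hz.antidiag hj hkl, hz.diag hj hkl]
  simp only [mul_add, mul_smul_comm, mul_assoc]
  linear_combination (norm := (match_scalars <;> field_simp <;> ring))
    -q⁻¹ • hz.sub_smul_pivotRatio_mul_mul_eq_zero hq hc hj hji hkl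

theorem qminor_pivotRow_pivotMultiple (hz : IsQuantumMatrixWith q c z) (hq : q ≠ 0)
    (h₀ : z 0 0 ≠ 0) (hi : 0 < i) {k l : Fin (n + 1)} (hkl : k < l) :
    qminor q (z 0) (pivotMultiple z i) k l = 0 := by
  simp only [qminor, pivotMultiple, ← mul_assoc, hz.pivotRow_mul_pivotRatio hq h₀ hi,
    smul_mul_assoc]
  rw [mul_assoc _ (z 0 l), hz.row hkl, mul_smul_comm, mul_assoc, inv_smul_smul₀ hq, sub_self]

end IsQuantumMatrixWith

theorem qdet_row_reduce_general {K D : Type*} [Field K] [DivisionRing D] [Algebra K D] {q c : K}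
    (hq : q ≠ 0) (hc : c = 0 → q = q⁻¹) {n : ℕ} {z : Fin (n + 1) → Fin (n + 1) → D}
    (hz : IsQuantumMatrixWith q c z) (h₀ : z 0 0 ≠ 0) :
    qdet (algebraMap K D q) (rowReduction z) = qdet (algebraMap K D q) z := by
  refine apply_eq_of_apply_update_eq fun i w hw => ?_
  obtain rfl | hi := i.zero_le.eq_or_lt
  · rw [rowReduction, update_self, ← hw 0 le_rfl, update_eq_self]
  have pivotMultiple_vanishes :
      qdet (algebraMap K D q) (update w i (pivotMultiple z i)) = 0 := by
    refine qdet_eq_zero_of_qminor (κ := -q⁻¹) hi (fun k l hkl => ?_) fun j hj hji k l hkl => ?_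
    · rw [update_self, update_of_ne hi.ne, hw 0 hi.le]
      exact hz.qminor_pivotRow_pivotMultiple hq h₀ hi hkl
    · rw [update_self, update_of_ne hji.ne, hw j hji.le]
      exact hz.qminor_pivotMultiple_right hq hc h₀ hj hji hkl
  rw [rowReduction, update_of_ne hi.ne', qdet_update_sub, pivotMultiple_vanishes, sub_zero,
    ← hw i le_rfl, update_eq_self]

/-- **Row reducing the quantum determinant.**  The quantum determinant of the
row reduction `z'` of a quantum matrix `z` (with `z₁₁ ≠ 0`) equals the quantum
determinant of `z`. -/
theorem qdet_row_reduce {D : Type*} [DivisionRing D] (q : D)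
    (hq : q ≠ 0) (hqc : ∀ x : D, q * x = x * q) (n : ℕ)
    (z : Fin (n + 2) → Fin (n + 2) → D)
    (hz : IsQuantumMatrix q z) (h11 : z 0 0 ≠ 0)
    (z' : Fin (n + 2) → Fin (n + 2) → D)
    (hz'1 : ∀ j, z' 0 j = z 0 j)
    (hz'c1 : ∀ i : Fin (n + 2), i ≠ 0 → z' i 0 = 0)
    (hz'ij : ∀ i j : Fin (n + 2), i ≠ 0 → j ≠ 0 →
      z' i j = z i j - z i 0 * (z 0 0)⁻¹ * z 0 j) :
    qdet q z' = qdet q z := by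
  lift q to Subring.center D using Subring.mem_center_iff.2 fun x => (hqc x).symm
  rw [eq_rowReduction h11 hz'1 hz'c1 hz'ij]
  exact qdet_row_reduce_general (q := q) (by simpa using hq)
    (fun h => (sub_eq_zero.1 h).symm) hz.isQuantumMatrixWith h11
end

section
/- Let D be a division ring, q a nonzero central element of D, and n ≥ 2. Let z = (z_{ij})_{1≤i,j≤n} be a quantum matrix over D with z_{11} ≠ 0, and let z'' be the (n−1)×(n−1) matrix with entries z''_{ij} = z_{ij} − z_{i1} z_{11}^{-1} z_{1j} for 2 ≤ i, j ≤ n. Then det_q(z) = z_{11} · det_q(z''). -/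
/-!
In the quantum exterior algebra with generators `ξ_k`, where `ξ_k ^ 2 = 0` and
`ξ_l ξ_k = p ξ_k ξ_l` for `k < l` with `p = -q⁻¹`, the forms `ω_i = ∑ z_ik ξ_k` satisfy
`ω_0 ω_1 ⋯ ω_n = det_q(z) ξ_0 ξ_1 ⋯ ξ_n`. The row relations give `ω_0 ^ 2 = 0`. Gaussian
elimination replaces `ω_m` by `ω'_m = ω_m - c_m ω_0` with `c_m = z_m0 z_00⁻¹`. The resulting error
terms `ω_0 ω'_1 ⋯ ω'_{m-1} c_m ω_0` vanish, because `c_m` commutes with the `ω'_i`, moves past `ω_0`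
up to a scalar, and `ω'_i ω_0 = ω_i ω_0 = ω_0 (p ω_i)`. After the elimination the first column is
`(z_00, 0, …, 0)`, and the determinant can be expanded.

The commutations for `ω'_i`, `i < m`, require the main diagonal relation with coefficient
`q - q⁻¹`, which is the opposite of the one in `IsQuantumMatrix`. Over a division ring the relations
with `q⁻¹ - q` are so restrictive that both versions agree wherever they are used: rewriting
`z_12 z_01 z_00` in two ways shows that `q⁻¹ - q = q - q⁻¹` or that one of `z_01`, `z_02`, `z_10` is
zero. The same holds for every `2 × 3` submatrix and for the transposes, and `z_m0 = 0` makes the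
error term trivial.
-/

section QuantumExterior

variable {R α : Type*}

section Inversions

variable [LinearOrder α]

/-- The number of inversions of a finite sequence, extending `inversions` to words with letters in
a linear order. -/
def inversionCount {m : ℕ} (g : Fin m → α) : ℕ :=
  (Finset.univ.filter fun x : Fin m × Fin m => x.1 < x.2 ∧ g x.2 < g x.1).card

theorem inversionCount_eq_sum {m : ℕ} (g : Fin m → α) :
    inversionCount g = ∑ i, ∑ j, if i < j ∧ g j < g i then 1 else 0 := by
  rw [inversionCount, Finset.card_filter, Fintype.sum_prod_type]

theorem inversionCount_succ {m : ℕ} (g : Fin (m + 1) → α) :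
    inversionCount g = inversionCount (fun i : Fin m => g i.castSucc) +
      (Finset.univ.filter fun i : Fin m => g (Fin.last m) < g i.castSucc).card := by
  simp only [inversionCount_eq_sum, Finset.card_filter, Fin.sum_univ_castSucc,
    Finset.sum_add_distrib, Fin.castSucc_lt_castSucc_iff, Fin.castSucc_lt_last, true_and,
    (Fin.castSucc_lt_last _).not_gt, lt_irrefl, false_and, if_false, Finset.sum_const_zero,
    add_zero]

theorem inversions_decomposeFin_symm_zero {n : ℕ} (τ : Equiv.Perm (Fin n)) :
    inversions (Equiv.Perm.decomposeFin.symm (0, τ)) = inversions τ := by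
  change inversionCount _ = inversionCount _
  simp only [inversionCount_eq_sum, Fin.sum_univ_succ,
    Equiv.Perm.decomposeFin_symm_apply_zero, Equiv.Perm.decomposeFin_symm_apply_succ]
  simp

end Inversions

variable [Semiring R]

/-- The scalars `R` acting on coefficient families by left multiplication. -/
def scalarEnd : R →+* AddMonoid.End (Finset α → R) :=
  Module.toAddMonoidEnd R (Finset α → R)

theorem scalarEnd_apply (c : R) (f : Finset α → R) (S : Finset α) :
    scalarEnd c f S = c * f S := rfl

variable [LinearOrder α]

/-- The generator `ξ_k` of the quantum exterior algebra, which is subject to `ξ_k ^ 2 = 0` and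
`ξ_l ξ_k = p ξ_k ξ_l` for `k < l`. It is encoded as the operator on families indexed by the
monomials (the finite sets of letters) that is dual to multiplication by `ξ_k` on the right. -/
def wedgeEnd (p : R) (k : α) : AddMonoid.End (Finset α → R) where
  toFun f S := if k ∈ S then 0 else p ^ (S.filter (k < ·)).card * f (insert k S)
  map_zero' := by ext S; simp
  map_add' f g := by ext S; by_cases h : k ∈ S <;> simp [h, mul_add]

theorem wedgeEnd_apply (p : R) (k : α) (f : Finset α → R) (S : Finset α) :
    wedgeEnd p k f S = if k ∈ S then 0 else p ^ (S.filter (k < ·)).card * f (insert k S) := rfl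

theorem wedgeEnd_mul_scalarEnd {p : R} (hp : ∀ x, Commute p x) (k : α) (c : R) :
    wedgeEnd p k * scalarEnd c = scalarEnd c * wedgeEnd p k := by
  ext f S
  simp only [AddMonoid.End.coe_mul, Function.comp_apply, wedgeEnd_apply, scalarEnd_apply, mul_ite,
    mul_zero, ← mul_assoc, ((hp c).pow_left _).eq]

theorem wedgeEnd_mul_self (p : R) (k : α) : wedgeEnd p k * wedgeEnd p k = 0 := by
  ext f S
  simp [wedgeEnd_apply]

theorem wedgeEnd_mul_wedgeEnd_of_lt (p : R) {k l : α} (hkl : k < l) :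
    wedgeEnd p l * wedgeEnd p k = scalarEnd p * (wedgeEnd p k * wedgeEnd p l) := by
  ext f S
  by_cases hk : k ∈ S
  · simp [wedgeEnd_apply, scalarEnd_apply, hk]
  by_cases hl : l ∈ S
  · simp [wedgeEnd_apply, scalarEnd_apply, hl]
  have hcard : ((insert l S).filter (k < ·)).card = (S.filter (k < ·)).card + 1 := by
    rw [Finset.filter_insert, if_pos hkl, Finset.card_insert_of_notMem (by simp [hl])]
  have hcard' : (insert k S).filter (l < ·) = S.filter (l < ·) := by
    rw [Finset.filter_insert, if_neg hkl.not_gt]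
  simp only [AddMonoid.End.coe_mul, Function.comp_apply, wedgeEnd_apply, scalarEnd_apply,
    Finset.mem_insert, hk, hl, hkl.ne, hkl.ne', or_self, if_false, hcard, hcard',
    Finset.insert_comm l k, ← mul_assoc, ← pow_add, ← pow_succ']
  congr 2
  omega

theorem prod_wedgeEnd_apply_empty (p : R) {m : ℕ} (g : Fin m → α) (f : Finset α → R) :
    (List.ofFn fun i => wedgeEnd p (g i)).prod f ∅ =
      if Function.Injective g then p ^ inversionCount g * f (Finset.univ.image g) else 0 := by
  induction m generalizing f with
  | zero => simp [Function.injective_of_subsingleton, inversionCount]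
  | succ m ih =>
    have hinj : Function.Injective g ↔ Function.Injective (fun i : Fin m => g i.castSucc) ∧
        g (Fin.last m) ∉ Finset.univ.image fun i : Fin m => g i.castSucc := by
      conv_lhs => rw [← Fin.snoc_init_self g, Fin.snoc_injective_iff]
      simp [Fin.init_def]
    have himage : Finset.univ.image g =
        insert (g (Fin.last m)) (Finset.univ.image fun i : Fin m => g i.castSucc) := by
      ext; simp [Fin.exists_fin_succ', or_comm, eq_comm]
    rw [List.ofFn_succ', List.concat_eq_append, List.prod_append, List.prod_singleton,
      AddMonoid.End.coe_mul, Function.comp_apply, ih]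
    by_cases hg : Function.Injective fun i : Fin m => g i.castSucc
    · simp only [hinj, hg, if_true, true_and, wedgeEnd_apply, ite_not, mul_ite, mul_zero,
        ← mul_assoc, ← pow_add, inversionCount_succ g, himage, Finset.filter_image,
        Finset.card_image_of_injective _ hg]
    · simp [hinj, hg]

theorem prod_scalarEnd_mul_wedgeEnd {p : R} (hp : ∀ x, Commute p x) {m : ℕ} (c : Fin m → R)
    (g : Fin m → α) :
    (List.ofFn fun i => scalarEnd (c i) * wedgeEnd p (g i)).prod =
      scalarEnd (List.ofFn c).prod * (List.ofFn fun i => wedgeEnd p (g i)).prod := by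
  induction m with
  | zero => simp
  | succ m ih =>
    simp only [List.ofFn_succ, List.prod_cons, ih, map_mul, mul_assoc]
    rw [← mul_assoc (wedgeEnd p (g 0)), wedgeEnd_mul_scalarEnd hp, mul_assoc]

variable [Fintype α]

/-- The linear form `∑ v_k ξ_k` in the quantum exterior algebra that is attached to a row `v`. -/
def rowForm (p : R) (v : α → R) : AddMonoid.End (Finset α → R) :=
  ∑ k, scalarEnd (v k) * wedgeEnd p k

theorem rowForm_mul_scalarEnd {p : R} (hp : ∀ x, Commute p x) {v : α → R} {c d : R}
    (h : ∀ k, v k * c = d * v k) : rowForm p v * scalarEnd c = scalarEnd d * rowForm p v := by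
  simp only [rowForm, Finset.sum_mul, Finset.mul_sum]
  refine Finset.sum_congr rfl fun k _ => ?_
  rw [mul_assoc, wedgeEnd_mul_scalarEnd hp, ← mul_assoc, ← mul_assoc, ← map_mul, ← map_mul, h]

theorem rowForm_mul_rowForm [LocallyFiniteOrderTop α] [LocallyFiniteOrderBot α]
    {p : R} (hp : ∀ x, Commute p x) (v w : α → R) :
    rowForm p v * rowForm p w = ∑ k, ∑ l ∈ Finset.Ioi k,
      scalarEnd (v k * w l + p * (v l * w k)) * (wedgeEnd p k * wedgeEnd p l) := by
  have expand (k l : α) : scalarEnd (v k) * wedgeEnd p k * (scalarEnd (w l) * wedgeEnd p l) =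
      scalarEnd (v k * w l) * (wedgeEnd p k * wedgeEnd p l) := by
    rw [map_mul, mul_assoc, mul_assoc, ← mul_assoc (wedgeEnd p k), wedgeEnd_mul_scalarEnd hp,
      mul_assoc]
  have swap {k l : α} (hkl : k < l) :
      scalarEnd (v l * w k) * (wedgeEnd p l * wedgeEnd p k) =
        scalarEnd (p * (v l * w k)) * (wedgeEnd p k * wedgeEnd p l) := by
    rw [wedgeEnd_mul_wedgeEnd_of_lt p hkl, ← mul_assoc, ← map_mul, (hp _).eq]
  calc rowForm p v * rowForm p w
      = ∑ l, ∑ k, scalarEnd (v k * w l) * (wedgeEnd p k * wedgeEnd p l) := by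
        simp only [rowForm, Finset.sum_mul_sum, expand]
        exact Finset.sum_comm
    _ = ∑ l, ∑ k ∈ {l}ᶜ, scalarEnd (v k * w l) * (wedgeEnd p k * wedgeEnd p l) := by
        refine Finset.sum_congr rfl fun l _ => ?_
        rw [Fintype.sum_eq_add_sum_compl l, wedgeEnd_mul_self, mul_zero, zero_add]
    _ = _ := by
        rw [← Finset.sum_sum_Ioi_add_eq_sum_sum_off_diag]
        refine Finset.sum_congr rfl fun k _ => Finset.sum_congr rfl fun l hl => ?_
        rw [swap (Finset.mem_Ioi.1 hl), add_comm, map_add, add_mul]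

theorem prod_rowForm {p : R} (hp : ∀ x, Commute p x) {m : ℕ} (v : Fin m → α → R) :
    (List.ofFn fun i => rowForm p (v i)).prod = ∑ g : Fin m → α,
      scalarEnd (List.ofFn fun i => v i (g i)).prod *
        (List.ofFn fun i => wedgeEnd p (g i)).prod := by
  simp only [← prod_scalarEnd_mul_wedgeEnd hp]
  exact (MultilinearMap.mkPiAlgebraFin ℕ m (AddMonoid.End (Finset α → R))).map_sum
    fun i k => scalarEnd (v i k) * wedgeEnd p k

theorem prod_rowForm_apply_empty {p : R} (hp : ∀ x, Commute p x) {n : ℕ} (v : Fin n → Fin n → R) :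
    (List.ofFn fun i => rowForm p (v i)).prod (fun _ => 1) ∅ =
      ∑ σ : Equiv.Perm (Fin n), p ^ inversions σ * (List.ofFn fun i => v i (σ i)).prod := by
  have apply_empty (g : Fin n → Fin n) :
      (scalarEnd (List.ofFn fun i => v i (g i)).prod *
        (List.ofFn fun i => wedgeEnd p (g i)).prod :
          AddMonoid.End (Finset (Fin n) → R)) (fun _ => 1) ∅ =
      if Function.Injective g then p ^ inversionCount g * (List.ofFn fun i => v i (g i)).prod
      else 0 := by
    simp only [AddMonoid.End.coe_mul, Function.comp_apply, scalarEnd_apply,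
      prod_wedgeEnd_apply_empty, mul_ite, mul_one, mul_zero, ← ((hp _).pow_left _).eq]
  have sum_apply (F : (Fin n → Fin n) → AddMonoid.End (Finset (Fin n) → R))
      (f : Finset (Fin n) → R) : (∑ g, F g) f = ∑ g, F g f :=
    AddMonoidHom.finsetSum_apply F _ f
  rw [prod_rowForm hp, sum_apply, Finset.sum_apply,
    Finset.sum_congr rfl fun g _ => apply_empty g]
  refine (Fintype.sum_of_injective (fun σ : Equiv.Perm (Fin n) => (σ : Fin n → Fin n))
    DFunLike.coe_injective _ _ (fun g hg => if_neg fun hinj => hg ?_) fun σ => ?_).symm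
  · exact ⟨Equiv.ofBijective g (Finite.injective_iff_bijective.1 hinj), rfl⟩
  · exact (if_pos σ.injective).symm

end QuantumExterior

section ListProducts

variable {A : Type*}

theorem exists_list_prod_mul_eq_mul [Monoid A] {w : A} {L : List A}
    (h : ∀ x ∈ L, ∃ y, x * w = w * y) : ∃ y, L.prod * w = w * y := by
  induction L with
  | nil => exact ⟨1, by simp⟩
  | cons x L ih =>
    obtain ⟨y, hy⟩ := h x List.mem_cons_self
    obtain ⟨y', hy'⟩ := ih fun a ha => h a (List.mem_cons_of_mem _ ha)
    exact ⟨y * y', by rw [List.prod_cons, mul_assoc, hy', ← mul_assoc, hy, mul_assoc]⟩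

theorem mul_list_prod_mul_mul_eq_zero [MonoidWithZero A] {w c d : A} {L : List A}
    (hw : w * w = 0) (hwc : w * c = d * w) (hLc : ∀ x ∈ L, Commute x c)
    (hLw : ∀ x ∈ L, ∃ y, x * w = w * y) : w * L.prod * (c * w) = 0 := by
  obtain ⟨y, hy⟩ := exists_list_prod_mul_eq_mul hLw
  have hc : Commute L.prod c := Commute.list_prod_left _ _ hLc
  calc w * L.prod * (c * w) = w * (L.prod * c) * w := by simp only [mul_assoc]
    _ = w * c * (L.prod * w) := by rw [hc.eq]; simp only [mul_assoc]
    _ = d * (w * w) * y := by rw [hwc, hy]; simp only [mul_assoc]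
    _ = 0 := by rw [hw, mul_zero, zero_mul]

theorem mul_prod_map_eq_of_pairwise [Monoid A] {ι : Type*} {r : ι → ι → Prop} {w : A}
    {f g : ι → A}
    (h : ∀ (L : List ι) (m : ι), (∀ i ∈ L, r i m) →
      w * (L.map f).prod * f m = w * (L.map f).prod * g m)
    {L : List ι} (hL : L.Pairwise r) : w * (L.map f).prod = w * (L.map g).prod := by
  induction L using List.reverseRecOn with
  | nil => rfl
  | append_singleton L m ih =>
    obtain ⟨hL, -, hm⟩ := List.pairwise_append.1 hL
    simp only [List.map_append, List.prod_append, List.map_singleton, List.prod_singleton,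
      ← mul_assoc]
    rw [h L m fun i hi => hm i hi m List.mem_cons_self, ih hL]

end ListProducts

-- The letters are the entries of the matrix `!![a, b, c; d, e, f]`, with `t` in place of `q⁻¹ - q`.
-- The identity compares the normal forms of `(f * b) * a` and `f * (b * a)`.
theorem quantum_overlap_eq_zero {R : Type*} [Ring R] {q t a b c d e f : R}
    (hqc : ∀ x : R, q * x = x * q) (htc : ∀ x : R, t * x = x * t)
    (hba : b * a = q * (a * b)) (hca : c * a = q * (a * c)) (hcb : c * b = q * (b * c))
    (hdb : d * b = b * d) (hea : e * a = a * e + t * (b * d))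
    (hfa : f * a = a * f + t * (c * d)) (hfb : f * b = b * f + t * (c * e)) :
    t * (1 + t * q - q * q) * (b * c * d) = 0 := by
  have hq (x y : R) : x * (q * y) = q * (x * y) := by rw [← mul_assoc, ← hqc, mul_assoc]
  have ht (x y : R) : x * (t * y) = t * (x * y) := by rw [← mul_assoc, ← htc, mul_assoc]
  have hba' (x : R) : b * (a * x) = q * (a * (b * x)) := by simp only [← mul_assoc, hba]
  have hca' (x : R) : c * (a * x) = q * (a * (c * x)) := by simp only [← mul_assoc, hca]
  have hcb' (x : R) : c * (b * x) = q * (b * (c * x)) := by simp only [← mul_assoc, hcb]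
  have left : f * b * a = q * (a * (b * f)) + t * (q * (a * (c * e))) +
      t * (b * (c * d)) + t * (t * (q * (b * (c * d)))) := by
    calc f * b * a = b * (f * a) + t * (c * (e * a)) := by
          rw [hfb, add_mul]; simp only [mul_assoc]
      _ = _ := by
          rw [hfa, hea]
          simp only [mul_add, hba', hca', hcb', ht b, ht c]
          abel
  have right : f * (b * a) = q * (a * (b * f)) + t * (q * (a * (c * e))) +
      t * (q * (q * (b * (c * d)))) := by
    calc f * (b * a) = q * (f * a * b) := by rw [hba, hq, mul_assoc]
      _ = q * (a * (f * b) + t * (c * (d * b))) := by rw [hfa, add_mul]; simp only [mul_assoc]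
      _ = _ := by
          rw [hfb, hdb]
          simp only [mul_add, hcb', ht a, ht q]
  have overlap := (left.symm.trans (mul_assoc f b a)).trans right
  rw [add_assoc, add_right_inj, ← sub_eq_zero] at overlap
  rw [← overlap]
  simp only [mul_add, mul_sub, add_mul, sub_mul, mul_one, mul_assoc]

section DivisionRing

variable {D : Type*} [DivisionRing D] {q : D}

theorem commute_neg_inv (hqc : ∀ x : D, q * x = x * q) (x : D) : Commute (-q⁻¹) x :=
  (show Commute q x from hqc x).inv_left₀.neg_left

theorem qdet_eq_prod_rowForm (hqc : ∀ x : D, q * x = x * q) {n : ℕ} (v : Fin n → Fin n → D) :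
    qdet q v = (List.ofFn fun i => rowForm (-q⁻¹) (v i)).prod (fun _ => 1) ∅ :=
  (prod_rowForm_apply_empty (commute_neg_inv hqc) v).symm

theorem qdet_of_first_col_eq_zero (hqc : ∀ x : D, q * x = x * q) {n : ℕ}
    (v : Fin (n + 1) → Fin (n + 1) → D) (hv : ∀ i : Fin n, v i.succ 0 = 0) :
    qdet q v = v 0 0 * qdet q (fun i j : Fin n => v i.succ j.succ) := by
  have vanish (k : Fin n) (τ : Equiv.Perm (Fin n)) :
      (List.ofFn fun i => v i (Equiv.Perm.decomposeFin.symm (k.succ, τ) i)).prod = 0 := by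
    set σ := Equiv.Perm.decomposeFin.symm (k.succ, τ) with hσ
    obtain ⟨i, hi⟩ := σ.surjective 0
    have hi0 : i ≠ 0 := by
      rintro rfl
      simp [hσ] at hi
    obtain ⟨i, rfl⟩ := Fin.exists_succ_eq.2 hi0
    exact List.prod_eq_zero (List.mem_ofFn.2 ⟨i.succ, by simp [hi, hv]⟩)
  rw [qdet, ← Equiv.Perm.decomposeFin.symm.sum_comp, Fintype.sum_prod_type, Fin.sum_univ_succ]
  simp only [vanish, mul_zero, Finset.sum_const_zero, add_zero, qdet, Finset.mul_sum]
  refine Finset.sum_congr rfl fun τ _ => ?_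
  rw [inversions_decomposeFin_symm_zero, List.ofFn_succ, List.prod_cons]
  simp only [Equiv.Perm.decomposeFin_symm_apply_zero, Equiv.Perm.decomposeFin_symm_apply_succ,
    Equiv.swap_self, Equiv.refl_apply]
  rw [← mul_assoc, ((commute_neg_inv hqc (v 0 0)).pow_left _).eq, mul_assoc]

theorem rowForm_mul_self_eq_zero (hq : q ≠ 0) (hqc : ∀ x : D, q * x = x * q) {n : ℕ}
    {v : Fin n → D} (hv : ∀ k l, k < l → v l * v k = q * (v k * v l)) :
    rowForm (-q⁻¹) v * rowForm (-q⁻¹) v = 0 := by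
  rw [rowForm_mul_rowForm (commute_neg_inv hqc)]
  refine Finset.sum_eq_zero fun k _ => Finset.sum_eq_zero fun l hl => ?_
  rw [hv k l (Finset.mem_Ioi.1 hl), neg_mul, inv_mul_cancel_left₀ hq, add_neg_cancel, map_zero,
    zero_mul]

theorem rowForm_mul_rowForm_swap (hq : q ≠ 0) (hqc : ∀ x : D, q * x = x * q) {n : ℕ}
    {v w : Fin n → D} (hanti : ∀ k l, k < l → v l * w k = w k * v l)
    (hdiag : ∀ k l, k < l → w l * v k - v k * w l = (q - q⁻¹) * (v l * w k)) :
    rowForm (-q⁻¹) w * rowForm (-q⁻¹) v =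
      rowForm (-q⁻¹) v * (scalarEnd (-q⁻¹) * rowForm (-q⁻¹) w) := by
  have hp := commute_neg_inv hqc
  rw [← mul_assoc, rowForm_mul_scalarEnd hp fun k => (hp (v k)).eq.symm, mul_assoc,
    rowForm_mul_rowForm hp, rowForm_mul_rowForm hp, Finset.mul_sum]
  refine Finset.sum_congr rfl fun k _ => ?_
  rw [Finset.mul_sum]
  refine Finset.sum_congr rfl fun l hl => ?_
  rw [← mul_assoc (scalarEnd (-q⁻¹)), ← map_mul]
  have hkl := Finset.mem_Ioi.1 hl
  rw [sub_eq_iff_eq_add.1 (hdiag k l hkl), ← hanti k l hkl]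
  congr 2
  simp only [mul_add, sub_mul, mul_sub, neg_mul, mul_neg, inv_mul_cancel_left₀ hq, neg_neg]
  abel

theorem inv_mul_eq_of_mul_eq (hqc : ∀ x : D, q * x = x * q) {a y : D} (ha : a ≠ 0)
    (h : y * a = q * (a * y)) : a⁻¹ * y = q * (y * a⁻¹) := by
  rw [inv_mul_eq_iff_eq_mul₀ ha, ← mul_assoc, ← hqc, mul_assoc q, ← mul_assoc a, ← mul_assoc q, ← h,
    mul_inv_cancel_right₀ ha]

namespace IsQuantumMatrix

variable {m n : ℕ} {z : Fin m → Fin n → D}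

theorem transpose (hz : IsQuantumMatrix q z) : IsQuantumMatrix q fun i j => z j i := by
  obtain ⟨hrow, hcol, hanti, hdiag⟩ := hz
  refine ⟨fun i k l => hcol k l i, fun i j k => hrow k i j,
    fun i j k l hij hkl => (hanti k l i j hkl hij).symm, fun i j k l hij hkl => ?_⟩
  rw [hdiag k l i j hkl hij, hanti k l i j hkl hij]

theorem sub_inv_eq_or_eq_zero (hq : q ≠ 0) (hqc : ∀ x : D, q * x = x * q)
    (hz : IsQuantumMatrix q z) {i j : Fin m} {k l s : Fin n} (hij : i < j) (hkl : k < l)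
    (hls : l < s) : q⁻¹ - q = q - q⁻¹ ∨ z i l = 0 ∨ z i s = 0 ∨ z j k = 0 := by
  obtain ⟨hrow, -, hanti, hdiag⟩ := hz
  have hks := hkl.trans hls
  have htc (x : D) : (q⁻¹ - q) * x = x * (q⁻¹ - q) :=
    ((show Commute q x from hqc x).inv_left₀.sub_left (hqc x)).eq
  have overlap := quantum_overlap_eq_zero hqc htc (hrow i k l hkl) (hrow i k s hks)
    (hrow i l s hls) (hanti i j k l hij hkl).symm
    (sub_eq_iff_eq_add'.1 (hdiag i j k l hij hkl)) (sub_eq_iff_eq_add'.1 (hdiag i j k s hij hks))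
    (sub_eq_iff_eq_add'.1 (hdiag i j l s hij hls))
  have hcoeff : 1 + (q⁻¹ - q) * q - q * q = (q⁻¹ - q - (q - q⁻¹)) * q := by
    simp only [sub_mul, inv_mul_cancel₀ hq]
    abel
  simp only [hcoeff, mul_eq_zero, hq, or_false, sub_eq_zero, or_assoc] at overlap
  rcases overlap with heq | hrest
  · exact .inl (by rw [heq])
  · exact hrest

theorem diag_of_ne_zero (hq : q ≠ 0) (hqc : ∀ x : D, q * x = x * q) (hz : IsQuantumMatrix q z)
    {h i j : Fin m} {k r s : Fin n} (hhi : h < i) (hij : i < j) (hkr : k ≤ r) (hrs : r < s)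
    (hjk : z j k ≠ 0) : z i s * z h r - z h r * z i s = (q - q⁻¹) * (z h s * z i r) := by
  have hdiag := hz.2.2.2 h i r s hhi hrs
  by_cases hsign : q⁻¹ - q = q - q⁻¹
  · rw [hdiag, hsign]
  have hprod : z h s * z i r = 0 := by
    rcases hkr.eq_or_lt with rfl | hkr
    · rcases hz.transpose.sub_inv_eq_or_eq_zero hq hqc hrs hhi hij with h' | hi | hj | hs
      · exact absurd h' hsign
      · rw [hi, mul_zero]
      · exact absurd hj hjk
      · rw [hs, zero_mul]
    · rcases hz.sub_inv_eq_or_eq_zero hq hqc (hhi.trans hij) hkr hrs with h' | hr | hs | hj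
      · exact absurd h' hsign
      · have hne : q⁻¹ - q ≠ 0 := fun h0 => hsign (by rw [h0, ← neg_sub, h0, neg_zero])
        rw [hr, mul_zero, zero_mul, sub_zero] at hdiag
        exact (mul_eq_zero.1 hdiag.symm).resolve_left hne
      · rw [hs, zero_mul]
      · exact absurd hj hjk
  rw [hdiag, hprod, mul_zero, mul_zero]

end IsQuantumMatrix

section Reduction

variable {m n : ℕ} {z : Fin (m + 1) → Fin (n + 1) → D}

/-- The `(i + 1)`-st row of `z` after Gaussian elimination of its entry in column `0`. Column `0` is
kept, so that the row still is a linear form in the same generators as the rows of `z`. -/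
def reducedRow (z : Fin (m + 1) → Fin (n + 1) → D) (i : Fin m) (j : Fin (n + 1)) : D :=
  z i.succ j - z i.succ 0 * (z 0 0)⁻¹ * z 0 j

theorem reducedRow_zero (h00 : z 0 0 ≠ 0) (i : Fin m) : reducedRow z i 0 = 0 := by
  rw [reducedRow, inv_mul_cancel_right₀ h00, sub_self]

theorem rowForm_reducedRow (p : D) (i : Fin m) : rowForm p (reducedRow z i) =
    rowForm p (z i.succ) - scalarEnd (z i.succ 0 * (z 0 0)⁻¹) * rowForm p (z 0) := by
  simp only [rowForm, reducedRow, map_sub, map_mul, sub_mul, mul_assoc, Finset.mul_sum,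
    Finset.sum_sub_distrib]

theorem rowForm_zero_mul_scalarEnd (hq : q ≠ 0) (hqc : ∀ x : D, q * x = x * q)
    (hz : IsQuantumMatrix q z) (h00 : z 0 0 ≠ 0) (i : Fin m) :
    rowForm (-q⁻¹) (z 0) * scalarEnd (z i.succ 0 * (z 0 0)⁻¹) =
      scalarEnd (q⁻¹ * (z i.succ 0 * (z 0 0)⁻¹)) * rowForm (-q⁻¹) (z 0) := by
  obtain ⟨hrow, hcol, hanti, -⟩ := hz
  refine rowForm_mul_scalarEnd (commute_neg_inv hqc) fun k => ?_
  rcases Fin.eq_zero_or_eq_succ k with rfl | ⟨k, rfl⟩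
  · rw [← mul_assoc, ← inv_mul_cancel_left₀ hq (z 0 0 * z i.succ 0), ← hcol 0 i.succ 0 i.succ_pos,
      mul_assoc, mul_assoc, mul_inv_cancel₀ h00, mul_assoc, inv_mul_cancel_right₀ h00, mul_one]
  · rw [← mul_assoc, hanti 0 i.succ 0 k.succ i.succ_pos k.succ_pos, mul_assoc, mul_assoc, mul_assoc,
      inv_mul_eq_of_mul_eq hqc h00 (hrow 0 0 k.succ k.succ_pos), ← mul_assoc _ q, ← hqc,
      mul_assoc q, inv_mul_cancel_left₀ hq]

theorem commute_reducedRow_col_zero (hqc : ∀ x : D, q * x = x * q) (hz : IsQuantumMatrix q z)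
    (h00 : z 0 0 ≠ 0) {i j : Fin m} (hij : i < j) {k : Fin (n + 1)} (hk : 0 < k) :
    Commute (reducedRow z i k) (z j.succ 0) := by
  obtain ⟨-, hcol, hanti, -⟩ := hz
  have hij' := Fin.succ_lt_succ_iff.2 hij
  have hc : z i.succ 0 * (z 0 0)⁻¹ * z j.succ 0 = z j.succ 0 * (z i.succ 0 * (z 0 0)⁻¹) := by
    rw [mul_assoc, inv_mul_eq_of_mul_eq hqc h00 (hcol 0 j.succ 0 j.succ_pos), ← mul_assoc, ← hqc,
      mul_assoc, ← mul_assoc (z i.succ 0), ← mul_assoc q, ← hcol i.succ j.succ 0 hij', mul_assoc]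
  exact .sub_left (hanti i.succ j.succ 0 k hij' hk)
    (.mul_left hc (hanti 0 j.succ 0 k j.succ_pos hk))

theorem commute_reducedRow_zero_zero (hq : q ≠ 0) (hqc : ∀ x : D, q * x = x * q)
    (hz : IsQuantumMatrix q z) (h00 : z 0 0 ≠ 0) {i j : Fin m} (hij : i < j)
    (hj : z j.succ 0 ≠ 0) {k : Fin (n + 1)} (hk : 0 < k) :
    Commute (reducedRow z i k) (z 0 0) := by
  have hdiag := hz.diag_of_ne_zero hq hqc i.succ_pos (Fin.succ_lt_succ_iff.2 hij) le_rfl hk hj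
  obtain ⟨hrow, hcol, hanti, -⟩ := hz
  have hright : z i.succ 0 * (z 0 0)⁻¹ * z 0 k * z 0 0 = q * (z 0 k * z i.succ 0) := by
    rw [mul_assoc, hrow 0 0 k hk, ← mul_assoc, ← hqc, mul_assoc q, ← mul_assoc _ (z 0 0),
      inv_mul_cancel_right₀ h00, hanti 0 i.succ 0 k i.succ_pos hk]
  have hleft : z 0 0 * (z i.succ 0 * (z 0 0)⁻¹ * z 0 k) = q⁻¹ * (z 0 k * z i.succ 0) := by
    rw [eq_inv_mul_iff_mul_eq₀ hq]
    simp only [← mul_assoc]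
    rw [mul_assoc q, ← hcol 0 i.succ 0 i.succ_pos, mul_inv_cancel_right₀ h00,
      hanti 0 i.succ 0 k i.succ_pos hk]
  rw [Commute, SemiconjBy, ← sub_eq_zero, reducedRow, sub_mul, mul_sub, hright, hleft,
    sub_sub_sub_comm, hdiag, sub_mul, sub_self]

theorem commute_reducedRow_mul_inv (hq : q ≠ 0) (hqc : ∀ x : D, q * x = x * q)
    (hz : IsQuantumMatrix q z) (h00 : z 0 0 ≠ 0) {i j : Fin m} (hij : i < j)
    (hj : z j.succ 0 ≠ 0) (k : Fin (n + 1)) :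
    Commute (reducedRow z i k) (z j.succ 0 * (z 0 0)⁻¹) := by
  rcases eq_zero_or_pos k with rfl | hk
  · rw [reducedRow_zero h00]
    exact Commute.zero_left _
  · exact (commute_reducedRow_col_zero hqc hz h00 hij hk).mul_right
      (commute_reducedRow_zero_zero hq hqc hz h00 hij hj hk).inv_right₀

theorem rowForm_reducedRow_mul_rowForm_zero (hq : q ≠ 0) (hqc : ∀ x : D, q * x = x * q)
    (hz : IsQuantumMatrix q z) {i j : Fin m} (hij : i < j) (hj : z j.succ 0 ≠ 0) :
    rowForm (-q⁻¹) (reducedRow z i) * rowForm (-q⁻¹) (z 0) =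
      rowForm (-q⁻¹) (z 0) * (scalarEnd (-q⁻¹) * rowForm (-q⁻¹) (z i.succ)) := by
  rw [rowForm_reducedRow, sub_mul, mul_assoc, rowForm_mul_self_eq_zero hq hqc (hz.1 0), mul_zero,
    sub_zero]
  exact rowForm_mul_rowForm_swap hq hqc (fun k l hkl => hz.2.2.1 0 i.succ k l i.succ_pos hkl)
    fun k l hkl =>
      hz.diag_of_ne_zero hq hqc i.succ_pos (Fin.succ_lt_succ_iff.2 hij) k.zero_le hkl hj

theorem rowForm_zero_mul_prod_mul_rowForm_reducedRow (hq : q ≠ 0) (hqc : ∀ x : D, q * x = x * q)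
    (hz : IsQuantumMatrix q z) (h00 : z 0 0 ≠ 0) (L : List (Fin m)) (j : Fin m)
    (hL : ∀ i ∈ L, i < j) :
    rowForm (-q⁻¹) (z 0) * (L.map fun i => rowForm (-q⁻¹) (reducedRow z i)).prod *
        rowForm (-q⁻¹) (reducedRow z j) =
      rowForm (-q⁻¹) (z 0) * (L.map fun i => rowForm (-q⁻¹) (reducedRow z i)).prod *
        rowForm (-q⁻¹) (z j.succ) := by
  rw [rowForm_reducedRow, mul_sub, sub_eq_self]
  by_cases hj : z j.succ 0 = 0
  · simp only [hj, zero_mul, map_zero, mul_zero]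
  refine mul_list_prod_mul_mul_eq_zero (rowForm_mul_self_eq_zero hq hqc (hz.1 0))
    (rowForm_zero_mul_scalarEnd hq hqc hz h00 j) ?commute ?swap
  all_goals
    simp only [List.forall_mem_map]
    intro i hi
  case commute =>
    exact rowForm_mul_scalarEnd (commute_neg_inv hqc) fun k =>
      (commute_reducedRow_mul_inv hq hqc hz h00 (hL i hi) hj k).eq
  case swap =>
    exact ⟨_, rowForm_reducedRow_mul_rowForm_zero hq hqc hz (hL i hi) hj⟩

theorem rowForm_zero_mul_prod_reducedRow (hq : q ≠ 0) (hqc : ∀ x : D, q * x = x * q)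
    (hz : IsQuantumMatrix q z) (h00 : z 0 0 ≠ 0) :
    rowForm (-q⁻¹) (z 0) * (List.ofFn fun i => rowForm (-q⁻¹) (reducedRow z i)).prod =
      rowForm (-q⁻¹) (z 0) * (List.ofFn fun i : Fin m => rowForm (-q⁻¹) (z i.succ)).prod := by
  simp only [List.ofFn_eq_map]
  exact mul_prod_map_eq_of_pairwise (rowForm_zero_mul_prod_mul_rowForm_reducedRow hq hqc hz h00)
    (List.pairwise_lt_finRange m)

theorem qdet_cons_reducedRow {z : Fin (n + 1) → Fin (n + 1) → D} (hq : q ≠ 0)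
    (hqc : ∀ x : D, q * x = x * q) (hz : IsQuantumMatrix q z) (h00 : z 0 0 ≠ 0) :
    qdet q (Fin.cons (z 0) (reducedRow z)) = qdet q z := by
  simp only [qdet_eq_prod_rowForm hqc, List.ofFn_succ, List.prod_cons, Fin.cons_zero, Fin.cons_succ,
    rowForm_zero_mul_prod_reducedRow hq hqc hz h00]

end Reduction

end DivisionRing

/-- If `z` is an `n × n` quantum matrix (`n ≥ 2`) with `z₁₁ ≠ 0` and `z''` is
the `(n-1) × (n-1)` matrix with entries `z''ᵢⱼ = zᵢⱼ - zᵢ₁ z₁₁⁻¹ z₁ⱼ`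
(`2 ≤ i, j ≤ n`), then `det_q(z) = z₁₁ · det_q(z'')`. -/
theorem qdet_eq_z11_mul_qdet_reduced {D : Type*} [DivisionRing D] (q : D)
    (hq : q ≠ 0) (hqc : ∀ x : D, q * x = x * q) (n : ℕ)
    (z : Fin (n + 2) → Fin (n + 2) → D)
    (hz : IsQuantumMatrix q z) (h11 : z 0 0 ≠ 0) :
    qdet q z =
      z 0 0 * qdet q (fun i j : Fin (n + 1) =>
        z i.succ j.succ - z i.succ 0 * (z 0 0)⁻¹ * z 0 j.succ) := by
  rw [← qdet_cons_reducedRow hq hqc hz h11]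
  exact qdet_of_first_col_eq_zero hqc _ (reducedRow_zero h11)
end
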